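/- Suppose G ⊂ ℝⁿ satisfies a β-quasihyperbolic boundary condition (β ∈ (0,1]) and dim_M(∂G) < λ with λ ∈ [n-1, n). Then there exist σ ≥ 1 and c > 0 such that for all j ∈ ℕ: (i) every Whitney cube Q of side 2^{-j} satisfies 2^{-jn} ≤ |S(Q)| ≤ σ · 2^{-jnβ}, hence W_j = ⋃_{k=0}^{[j - jβ]} W_{j,k,σ} where W_{j,k,σ} = {Q ∈ W_j : 2^{-(j-k)n} ≤ |S(Q)| ≤ σ·2^{-(j-k-1)n}}; and (ii) #W_{j,k,σ} ≤ c · j · 2^{n(j-k) + jβ(λ - n)} for each 0 ≤ k ≤ [j - jβ]. -/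

import Mathlib

open MeasureTheory ENNReal

/-- The quasihyperbolic distance `k_G(x, y) = inf_γ ∫_γ ds / dist(z, ∂G)`, the infimum
being over rectifiable curves in `G` from `x` to `y`, parametrized by arc length
(encoded as `1`-Lipschitz parametrizations). -/
noncomputable def qhDist {n : ℕ} (G : Set (EuclideanSpace ℝ (Fin n)))
    (x y : EuclideanSpace ℝ (Fin n)) : ℝ :=
  sInf {v : ℝ | ∃ (L : ℝ) (γ : ℝ → EuclideanSpace ℝ (Fin n)), 0 ≤ L ∧
    LipschitzWith 1 γ ∧ γ 0 = x ∧ γ L = y ∧ (∀ t ∈ Set.Icc (0:ℝ) L, γ t ∈ G) ∧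
    v = ∫ t in (0:ℝ)..L, 1 / Metric.infDist (γ t) (frontier G)}

/-- `G` satisfies a `β`-quasihyperbolic boundary condition with base point `x₀` and
constant `c`: `k_G(x, x₀) ≤ (1/β) log(1/dist(x, ∂G)) + c` for all `x ∈ G`. -/
def QHBCWith {n : ℕ} (G : Set (EuclideanSpace ℝ (Fin n))) (β : ℝ)
    (x₀ : EuclideanSpace ℝ (Fin n)) (c : ℝ) : Prop :=
  ∀ x ∈ G, qhDist G x x₀ ≤ (1 / β) * Real.log (1 / Metric.infDist x (frontier G)) + c

/-- `G` satisfies a `β`-quasihyperbolic boundary condition. -/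
def QHBC {n : ℕ} (G : Set (EuclideanSpace ℝ (Fin n))) (β : ℝ) : Prop :=
  ∃ x₀ ∈ G, ∃ c : ℝ, QHBCWith G β x₀ c

/-- `G` supports the `(q,p)`-Poincaré inequality
`(∫_G |u - u_G|^q)^{1/q} ≤ c (∫_G |∇u|^p)^{1/p}` for Sobolev functions on `G`. -/
def SupportsPoincare {n : ℕ} (G : Set (EuclideanSpace ℝ (Fin n))) (q p : ℝ) : Prop :=
  ∃ c : ℝ, ∀ u : EuclideanSpace ℝ (Fin n) → ℝ,
    DifferentiableOn ℝ u G → IntegrableOn u G volume →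
    IntegrableOn (fun x => ‖fderivWithin ℝ u G x‖ ^ p) G volume →
    (∫ x in G, |u x - (∫ y in G, u y) / (volume G).toReal| ^ q) ^ (1 / q)
      ≤ c * (∫ x in G, ‖fderivWithin ℝ u G x‖ ^ p) ^ (1 / p)

open MeasureTheory ENNReal

/-- The closed axis-parallel cube with center `c` and side length `l`. -/
def closedCube {n : ℕ} (c : EuclideanSpace ℝ (Fin n)) (l : ℝ) :
    Set (EuclideanSpace ℝ (Fin n)) :=
  {y | ∀ i, |y i - c i| ≤ l / 2}

/-- The distance between two sets. -/
noncomputable def setDist {n : ℕ} (A B : Set (EuclideanSpace ℝ (Fin n))) : ℝ :=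
  sInf {d : ℝ | ∃ a ∈ A, ∃ b ∈ B, d = dist a b}

/-- A Whitney decomposition of `G`: a countable family of closed dyadic cubes with
pairwise disjoint interiors whose union is `G`, each cube `Q` satisfying
`diam(Q) ≤ dist(Q, ∂G) ≤ 4 diam(Q)`. The `i`-th cube has center `c i` and side
length `s i`. -/
structure WhitneyDecomp (n : ℕ) (G : Set (EuclideanSpace ℝ (Fin n))) where
  c : ℕ → EuclideanSpace ℝ (Fin n)
  s : ℕ → ℝ
  dyadic : ∀ i, ∃ (j : ℤ) (k : Fin n → ℤ), s i = (2:ℝ) ^ (-j) ∧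
    ∀ m, c i m = ((k m : ℝ) + 1 / 2) * (2:ℝ) ^ (-j)
  disjoint_interiors : Pairwise fun i j =>
    interior (closedCube (c i) (s i)) ∩ interior (closedCube (c j) (s j)) = ∅
  cover : G = ⋃ i, closedCube (c i) (s i)
  diam_le_dist : ∀ i, Metric.diam (closedCube (c i) (s i))
    ≤ setDist (closedCube (c i) (s i)) (frontier G)
  dist_le_diam : ∀ i, setDist (closedCube (c i) (s i)) (frontier G)
    ≤ 4 * Metric.diam (closedCube (c i) (s i))

/-- The `i`-th cube of a Whitney decomposition. -/
def WhitneyDecomp.cube {n : ℕ} {G : Set (EuclideanSpace ℝ (Fin n))}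
    (W : WhitneyDecomp n G) (i : ℕ) : Set (EuclideanSpace ℝ (Fin n)) :=
  closedCube (W.c i) (W.s i)

/-- The `λ`-dimensional Minkowski precontent
`M_λ(E, r) = |⋃_{x ∈ E} B(x, r)| / r^{n-λ}`. -/
noncomputable def minkowskiPrecontent (n : ℕ) (E : Set (EuclideanSpace ℝ (Fin n)))
    (l r : ℝ) : ℝ≥0∞ :=
  volume (⋃ x ∈ E, Metric.ball x r) / ENNReal.ofReal (r ^ ((n : ℝ) - l))

/-- The upper Minkowski dimension
`dim_M(E) = sup {λ ≥ 0 : limsup_{r → 0+} M_λ(E, r) = ∞}`. -/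
noncomputable def upperMinkowskiDim (n : ℕ) (E : Set (EuclideanSpace ℝ (Fin n))) : ℝ :=
  sSup {l : ℝ | 0 ≤ l ∧
    Filter.limsup (fun r => minkowskiPrecontent n E l r) (nhdsWithin 0 (Set.Ioi 0)) = ⊤}

/-!
Let `s` be the side length of `Q`. The diameter bound traps the shadow `S(Q)` in a set of diameter
`≲ s ^ β`, which gives the upper bound in (i), and `Q ⊆ S(Q)` gives the lower one. Since `Q` is
within `≲ s ≤ s ^ β` of `∂G`, the shadow also lies in the `K s ^ β`-neighbourhood of `∂G`, whose
volume is `≲ s ^ (β (n - λ))` because `λ` exceeds the Minkowski dimension. The Whitney cubes overlap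
in null sets and each lies in at most `c_n j` shadows of `j`-th generation cubes, so the volumes of
those shadows add up to at most `c_n j` times the volume of the neighbourhood; dividing by the lower
bound `2 ^ (-(j - k) n)` for each shadow counts `W_{j,k,σ}`.
-/

section Order

theorem exists_le_mem_Icc_of_forall_succ_le {α : Type*} [LinearOrder α] {a b : ℕ → α} {v : α}
    (hab : ∀ k, a (k + 1) ≤ b k) (ha : a 0 ≤ v) :
    ∀ {m : ℕ}, v ≤ b m → ∃ k ≤ m, v ∈ Set.Icc (a k) (b k)
  | 0, hb => ⟨0, le_rfl, ha, hb⟩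
  | m + 1, hb => by
    rcases le_total v (b m) with hv | hv
    · obtain ⟨k, hk, hvk⟩ := exists_le_mem_Icc_of_forall_succ_le hab ha hv
      exact ⟨k, hk.trans m.le_succ, hvk⟩
    · exact ⟨m + 1, le_rfl, (hab m).trans hv, hb⟩

end Order

section Measure

theorem aedisjoint_of_disjoint_interior {E : Type*} [NormedAddCommGroup E] [NormedSpace ℝ E]
    [FiniteDimensional ℝ E] [MeasurableSpace E] [BorelSpace E] (μ : Measure E) [μ.IsAddHaarMeasure]
    {s t : Set E} (hs : Convex ℝ s) (ht : Convex ℝ t) (h : Disjoint (interior s) (interior t)) :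
    AEDisjoint μ s t := by
  have hsub : s ∩ t ⊆ frontier s ∪ frontier t := by
    intro x hx
    by_contra hfr
    have hint : x ∈ interior s ∩ interior t :=
      ⟨by_contra fun hxs => hfr (.inl ⟨subset_closure hx.1, hxs⟩),
        by_contra fun hxt => hfr (.inr ⟨subset_closure hx.2, hxt⟩)⟩
    exact h.notMem_of_mem_left hint.1 hint.2
  exact measure_mono_null hsub
    (measure_union_null (hs.addHaar_frontier μ) (ht.addHaar_frontier μ))

theorem sum_measure_biUnion_le {α ι κ : Type*} [MeasurableSpace α] [Countable ι] (μ : Measure α)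
    {A : ι → Set α} (hA : ∀ i, NullMeasurableSet (A i) μ)
    (hd : Pairwise (Function.onFun (AEDisjoint μ) A)) (F : Finset κ) (I : κ → Set ι) {N : ℝ≥0∞}
    (hN : ∀ i, ({q | q ∈ F ∧ i ∈ I q}.ncard : ℝ≥0∞) ≤ N) :
    ∑ q ∈ F, μ (⋃ i ∈ I q, A i) ≤ N * μ (⋃ i, A i) := by
  classical
  have hcount : ∀ i, ∑ q ∈ F, (I q).indicator (μ ∘ A) i =
      {q | q ∈ F ∧ i ∈ I q}.ncard * μ (A i) := fun i => by
    rw [← Finset.coe_filter, Set.ncard_coe_finset, ← nsmul_eq_mul, ← Finset.sum_const,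
      Finset.sum_filter]
    rfl
  calc ∑ q ∈ F, μ (⋃ i ∈ I q, A i) ≤ ∑ q ∈ F, ∑' i, (I q).indicator (μ ∘ A) i := by
        gcongr with q
        exact (measure_biUnion_le μ (I q).to_countable A).trans_eq (tsum_subtype (I q) (μ ∘ A))
    _ = ∑' i, ∑ q ∈ F, (I q).indicator (μ ∘ A) i :=
        (Summable.tsum_finsetSum fun _ _ => ENNReal.summable).symm
    _ ≤ ∑' i, N * μ (A i) := by
        gcongr with i
        rw [hcount]
        gcongr
        exact hN i
    _ = N * μ (⋃ i, A i) := by rw [ENNReal.tsum_mul_left, measure_iUnion₀ hd hA]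

theorem volume_le_ediam_pow {ι : Type*} [Fintype ι] (s : Set (EuclideanSpace ℝ ι)) :
    volume s ≤ Metric.ediam s ^ Fintype.card ι := by
  let e := (MeasurableEquiv.toLp 2 (ι → ℝ)).symm
  have he : LipschitzWith 1 e := PiLp.lipschitzWith_ofLp 2 _
  calc volume s = volume (e ⁻¹' (e '' s)) := by rw [Set.preimage_image_eq s e.injective]
    _ = volume (e '' s) :=
      (EuclideanSpace.volume_preserving_symm_measurableEquiv_toLp ι).measure_preimage_equiv _
    _ ≤ Metric.ediam (e '' s) ^ Fintype.card ι := Real.volume_pi_le_diam_pow _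
    _ ≤ Metric.ediam s ^ Fintype.card ι := by
      gcongr
      simpa only [ENNReal.coe_one, one_mul] using he.ediam_image_le s

end Measure

section Cube

variable {n : ℕ} {c : EuclideanSpace ℝ (Fin n)} {a : ℝ}

theorem closedCube_eq_preimage_closedBall (ha : 0 ≤ a) :
    closedCube c a = WithLp.ofLp ⁻¹' Metric.closedBall (WithLp.ofLp c) (a / 2) := by
  ext y
  simp only [closedCube, Set.mem_ofPred_eq, Set.mem_preimage, Metric.mem_closedBall,
    dist_pi_le_iff (div_nonneg ha zero_le_two), Real.dist_eq]

theorem self_mem_closedCube (ha : 0 ≤ a) : c ∈ closedCube c a := by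
  intro i
  rw [sub_self, abs_zero]
  positivity

theorem convex_closedCube (ha : 0 ≤ a) : Convex ℝ (closedCube c a) := by
  rw [closedCube_eq_preimage_closedBall ha]
  exact (convex_closedBall _ _).linear_preimage
    (EuclideanSpace.equiv (Fin n) ℝ).toLinearMap

theorem volume_closedCube (ha : 0 ≤ a) : volume (closedCube c a) = ENNReal.ofReal (a ^ n) := by
  have hball : MeasurableSet (Metric.closedBall (WithLp.ofLp c) (a / 2)) := measurableSet_closedBall
  rw [closedCube_eq_preimage_closedBall ha,
    (PiLp.volume_preserving_ofLp (Fin n)).measure_preimage hball.nullMeasurableSet,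
    Real.volume_pi_closedBall _ (div_nonneg ha zero_le_two), mul_div_cancel₀ _ two_ne_zero,
    Fintype.card_fin]

theorem diam_closedCube_le (ha : 0 ≤ a) : Metric.diam (closedCube c a) ≤ √n * a := by
  refine Metric.diam_le_of_forall_dist_le (by positivity) fun x hx y hy => ?_
  have hcoord : ∀ i, dist (x i) (y i) ≤ a := fun i =>
    calc dist (x i) (y i) ≤ dist (x i) (c i) + dist (y i) (c i) := dist_triangle_right _ _ _
      _ ≤ a / 2 + a / 2 := add_le_add (hx i) (hy i)
      _ = a := add_halves a
  calc dist x y = √(∑ i, dist (x i) (y i) ^ 2) := EuclideanSpace.dist_eq x y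
    _ ≤ √(∑ _i : Fin n, a ^ 2) := by gcongr with i; exact hcoord i
    _ = √n * a := by
      rw [Finset.sum_const, Finset.card_univ, Fintype.card_fin, nsmul_eq_mul,
        Real.sqrt_mul n.cast_nonneg, Real.sqrt_sq ha]

end Cube

theorem exists_dist_lt_of_setDist_lt {n : ℕ} {A B : Set (EuclideanSpace ℝ (Fin n))} {r : ℝ}
    (hA : A.Nonempty) (hB : B.Nonempty) (h : setDist A B < r) :
    ∃ a ∈ A, ∃ b ∈ B, dist a b < r := by
  obtain ⟨a₀, ha₀⟩ := hA
  obtain ⟨b₀, hb₀⟩ := hB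
  obtain ⟨_, ⟨a, ha, b, hb, rfl⟩, hab⟩ :=
    exists_lt_of_csInf_lt (by exact ⟨_, a₀, ha₀, b₀, hb₀, rfl⟩) h
  exact ⟨a, ha, b, hb, hab⟩

section Minkowski

variable {n : ℕ} {E : Set (EuclideanSpace ℝ (Fin n))} {l : ℝ}

theorem upperMinkowskiDim_nonneg : 0 ≤ upperMinkowskiDim n E :=
  Real.sSup_nonneg fun _ h => h.1

theorem le_of_limsup_minkowskiPrecontent_eq_top (hE : Bornology.IsBounded E)
    (h : Filter.limsup (minkowskiPrecontent n E l) (nhdsWithin 0 (Set.Ioi 0)) = ⊤) : l ≤ n := by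
  by_contra! hnl
  have hfin : volume (Metric.thickening 1 E) < ⊤ := hE.thickening.measure_lt_top
  refine (h ▸ hfin).not_ge (Filter.limsup_le_of_le (by isBoundedDefault) ?_)
  filter_upwards [Ioo_mem_nhdsGT (zero_lt_one' ℝ)] with r hr
  have hden : 1 ≤ ENNReal.ofReal (r ^ ((n : ℝ) - l)) := ENNReal.one_le_ofReal.2 <|
    Real.one_le_rpow_of_pos_of_le_one_of_nonpos hr.1 hr.2.le (by linarith)
  calc minkowskiPrecontent n E l r
      = volume (Metric.thickening r E) / ENNReal.ofReal (r ^ ((n : ℝ) - l)) := by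
        rw [minkowskiPrecontent, Metric.thickening_eq_biUnion_ball]
    _ ≤ volume (Metric.thickening 1 E) / 1 :=
        ENNReal.div_le_div (measure_mono (Metric.thickening_mono hr.2.le E)) hden
    _ = volume (Metric.thickening 1 E) := div_one _

theorem limsup_minkowskiPrecontent_lt_top (hE : Bornology.IsBounded E)
    (hl : upperMinkowskiDim n E < l) :
    Filter.limsup (minkowskiPrecontent n E l) (nhdsWithin 0 (Set.Ioi 0)) < ⊤ := by
  refine lt_top_iff_ne_top.2 fun h => hl.not_ge ?_
  exact le_csSup ⟨n, fun _ h' => le_of_limsup_minkowskiPrecontent_eq_top hE h'.2⟩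
    ⟨upperMinkowskiDim_nonneg.trans hl.le, h⟩

theorem exists_volume_thickening_le (hE : Bornology.IsBounded E) (hl : upperMinkowskiDim n E < l)
    (R : ℝ) :
    ∃ C : ℝ, 0 < C ∧ ∀ r ∈ Set.Ioc 0 R,
      volume (Metric.thickening r E) ≤ ENNReal.ofReal (C * r ^ ((n : ℝ) - l)) := by
  obtain ⟨M, hlimM, hMtop⟩ := exists_between (limsup_minkowskiPrecontent_lt_top hE hl)
  obtain ⟨r₀, hr₀ : 0 < r₀, hsmall⟩ :=
    mem_nhdsGT_iff_exists_Ioo_subset.1 (Filter.eventually_lt_of_limsup_lt hlimM)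
  obtain ⟨m, hm, hlarge⟩ : ∃ m > 0, ∀ r ∈ Set.Icc r₀ R, m ≤ r ^ ((n : ℝ) - l) :=
    isCompact_Icc.exists_forall_le'
      (ContinuousOn.rpow_const continuousOn_id fun r hr => .inl (hr₀.trans_le hr.1).ne')
      fun r hr => Real.rpow_pos_of_pos (hr₀.trans_le hr.1) _
  set V := (volume (Metric.thickening R E)).toReal
  have hV : volume (Metric.thickening R E) = ENNReal.ofReal V :=
    (ENNReal.ofReal_toReal hE.thickening.measure_lt_top.ne).symm
  have hM : 0 ≤ M.toReal := ENNReal.toReal_nonneg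
  have hVm : 0 ≤ V / m := by positivity
  refine ⟨M.toReal + V / m + 1, by positivity, fun r hr => ?_⟩
  have hrpow : 0 < r ^ ((n : ℝ) - l) := Real.rpow_pos_of_pos hr.1 _
  rcases lt_or_ge r r₀ with hrr₀ | hrr₀
  · have hcontent : minkowskiPrecontent n E l r ≤ M := (hsmall ⟨hr.1, hrr₀⟩).le
    rw [minkowskiPrecontent, ← Metric.thickening_eq_biUnion_ball,
      ENNReal.div_le_iff (ENNReal.ofReal_pos.2 hrpow).ne' ENNReal.ofReal_ne_top,
      ← ENNReal.ofReal_toReal hMtop.ne, ← ENNReal.ofReal_mul hM] at hcontent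
    refine hcontent.trans (ENNReal.ofReal_le_ofReal ?_)
    gcongr
    linarith
  · refine (measure_mono (Metric.thickening_mono hr.2 E)).trans ?_
    rw [hV]
    apply ENNReal.ofReal_le_ofReal
    calc V = V / m * m := (div_mul_cancel₀ V hm.ne').symm
      _ ≤ (M.toReal + V / m + 1) * r ^ ((n : ℝ) - l) := by
        gcongr
        · linarith
        · exact hlarge r ⟨hrr₀, hr.2⟩

end Minkowski

namespace WhitneyDecomp

variable {n : ℕ} {G : Set (EuclideanSpace ℝ (Fin n))} (W : WhitneyDecomp n G)

theorem side_pos (Q : ℕ) : 0 < W.s Q := by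
  obtain ⟨j, -, hj, -⟩ := W.dyadic Q
  rw [hj]
  positivity

theorem volume_cube (Q : ℕ) : volume (W.cube Q) = ENNReal.ofReal (W.s Q ^ n) :=
  volume_closedCube (W.side_pos Q).le

theorem diam_cube_le (Q : ℕ) : Metric.diam (W.cube Q) ≤ √n * W.s Q :=
  diam_closedCube_le (W.side_pos Q).le

theorem cube_nonempty (Q : ℕ) : (W.cube Q).Nonempty :=
  ⟨W.c Q, self_mem_closedCube (W.side_pos Q).le⟩

theorem iUnion_cube : ⋃ Q, W.cube Q = G :=
  W.cover.symm

theorem nullMeasurableSet_cube (Q : ℕ) : NullMeasurableSet (W.cube Q) :=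
  (convex_closedCube (W.side_pos Q).le).nullMeasurableSet volume

theorem aedisjoint_cube : Pairwise (Function.onFun (AEDisjoint volume) W.cube) := fun Q R hQR =>
  aedisjoint_of_disjoint_interior volume (convex_closedCube (W.side_pos Q).le)
    (convex_closedCube (W.side_pos R).le)
    (Set.disjoint_iff_inter_eq_empty.2 (W.disjoint_interiors hQR))

include W in
theorem dim_ne_zero : n ≠ 0 := by
  rintro rfl
  have hcube : ∀ Q, W.cube Q = Set.univ := fun Q => (W.cube_nonempty Q).eq_univ
  have hdisj : interior (W.cube 0) ∩ interior (W.cube 1) = ∅ := W.disjoint_interiors zero_ne_one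
  rw [hcube, hcube, interior_univ, Set.inter_univ] at hdisj
  exact Set.univ_nonempty.ne_empty hdisj

include W in
theorem frontier_nonempty (hG : Bornology.IsBounded G) : (frontier G).Nonempty := by
  have : NeZero n := ⟨W.dim_ne_zero⟩
  refine nonempty_frontier_iff.2 ⟨W.iUnion_cube ▸ Set.nonempty_iUnion.2 ⟨0, W.cube_nonempty 0⟩, ?_⟩
  rintro rfl
  exact NormedSpace.unbounded_univ ℝ (EuclideanSpace ℝ (Fin n)) hG

theorem exists_mem_cube_dist_frontier_lt (hG : Bornology.IsBounded G) (Q : ℕ) :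
    ∃ x ∈ W.cube Q, ∃ y ∈ frontier G, dist x y < (4 * √n + 1) * W.s Q := by
  refine exists_dist_lt_of_setDist_lt (W.cube_nonempty Q) (W.frontier_nonempty hG) ?_
  calc setDist (W.cube Q) (frontier G) ≤ 4 * Metric.diam (W.cube Q) := W.dist_le_diam Q
    _ ≤ 4 * (√n * W.s Q) := by gcongr; exact W.diam_cube_le Q
    _ < (4 * √n + 1) * W.s Q := by linarith [W.side_pos Q]

theorem finite_setOf_le_side (hG : Bornology.IsBounded G) {a : ℝ} (ha : 0 < a) :
    {Q | a ≤ W.s Q}.Finite := by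
  have hG_fin : volume (⋃ Q, W.cube Q) ≠ ⊤ := by
    rw [W.iUnion_cube]
    exact hG.measure_lt_top.ne
  refine (Measure.finite_const_le_meas_of_disjoint_iUnion₀ volume
    (ε := ENNReal.ofReal (a ^ n)) (ENNReal.ofReal_pos.2 (by positivity))
    W.nullMeasurableSet_cube W.aedisjoint_cube hG_fin).subset fun Q (hQ : a ≤ W.s Q) => ?_
  exact (ENNReal.ofReal_le_ofReal (by gcongr)).trans (W.volume_cube Q).ge

/-- The shadow `S(Q)`: the union of the Whitney cubes `R` whose chain passes through `Q*`, which is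
the relation `inChain Q R`. -/
def shadow (inChain : ℕ → ℕ → Prop) (Q : ℕ) : Set (EuclideanSpace ℝ (Fin n)) :=
  ⋃ R ∈ {R : ℕ | inChain Q R}, W.cube R

section Shadow

variable {W} {inChain : ℕ → ℕ → Prop} {Q : ℕ} {A β : ℝ}

theorem cube_subset_shadow (hself : inChain Q Q) : W.cube Q ⊆ W.shadow inChain Q :=
  Set.subset_biUnion_of_mem (u := W.cube) hself

theorem shadow_subset : W.shadow inChain Q ⊆ G :=
  (Set.iUnion₂_subset_iUnion _ W.cube).trans W.iUnion_cube.subset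

theorem ofReal_side_pow_le_volume_shadow (hself : inChain Q Q) :
    ENNReal.ofReal (W.s Q ^ n) ≤ volume (W.shadow inChain Q) :=
  (W.volume_cube Q).ge.trans (measure_mono (cube_subset_shadow hself))

theorem diam_shadow_le (hβ : 0 ≤ β) {cS : ℝ} (hcS : 0 ≤ cS)
    (hdiam : Metric.diam (W.shadow inChain Q) ≤ cS * Metric.diam (W.cube Q) ^ β) :
    Metric.diam (W.shadow inChain Q) ≤ cS * √n ^ β * W.s Q ^ β :=
  calc Metric.diam (W.shadow inChain Q) ≤ cS * Metric.diam (W.cube Q) ^ β := hdiam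
    _ ≤ cS * (√n * W.s Q) ^ β := by
      gcongr
      exact W.diam_cube_le Q
    _ = cS * √n ^ β * W.s Q ^ β := by
      rw [Real.mul_rpow (Real.sqrt_nonneg _) (W.side_pos Q).le, mul_assoc]

theorem volume_shadow_le (hG : Bornology.IsBounded G)
    (hdiam : Metric.diam (W.shadow inChain Q) ≤ A * W.s Q ^ β) :
    volume (W.shadow inChain Q) ≤ ENNReal.ofReal ((A * W.s Q ^ β) ^ n) := by
  have hediam : Metric.ediam (W.shadow inChain Q) ≠ ⊤ := (hG.subset shadow_subset).ediam_ne_top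
  calc volume (W.shadow inChain Q) ≤ Metric.ediam (W.shadow inChain Q) ^ n := by
        simpa only [Fintype.card_fin] using volume_le_ediam_pow (W.shadow inChain Q)
    _ = ENNReal.ofReal (Metric.diam (W.shadow inChain Q) ^ n) := by
        rw [ENNReal.ofReal_pow Metric.diam_nonneg, Metric.diam, ENNReal.ofReal_toReal hediam]
    _ ≤ ENNReal.ofReal ((A * W.s Q ^ β) ^ n) := by gcongr

theorem shadow_subset_thickening_frontier (hG : Bornology.IsBounded G) (hβ : β ≤ 1)
    (hself : inChain Q Q) (hdiam : Metric.diam (W.shadow inChain Q) ≤ A * W.s Q ^ β)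
    (hside : W.s Q ≤ 1) :
    W.shadow inChain Q ⊆ Metric.thickening ((A + (4 * √n + 1)) * W.s Q ^ β) (frontier G) := by
  intro x hx
  obtain ⟨y, hy, z, hz, hyz⟩ := W.exists_mem_cube_dist_frontier_lt hG Q
  refine Metric.mem_thickening_iff.2 ⟨z, hz, ?_⟩
  have hside_le : W.s Q ≤ W.s Q ^ β := Real.self_le_rpow_of_le_one (W.side_pos Q).le hside hβ
  have hxy : dist x y ≤ A * W.s Q ^ β :=
    (Metric.dist_le_diam_of_mem (hG.subset shadow_subset) hx (cube_subset_shadow hself hy)).trans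
      hdiam
  calc dist x z ≤ dist x y + dist y z := dist_triangle x y z
    _ < A * W.s Q ^ β + (4 * √n + 1) * W.s Q := add_lt_add_of_le_of_lt hxy hyz
    _ ≤ A * W.s Q ^ β + (4 * √n + 1) * W.s Q ^ β := by gcongr
    _ = (A + (4 * √n + 1)) * W.s Q ^ β := by ring

theorem sum_volume_shadow_le (F : Finset ℕ) {N : ℝ≥0∞} {U : Set (EuclideanSpace ℝ (Fin n))}
    (hU : ∀ Q ∈ F, W.shadow inChain Q ⊆ U)
    (hN : ∀ R, ({Q | Q ∈ F ∧ inChain Q R}.ncard : ℝ≥0∞) ≤ N) :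
    ∑ Q ∈ F, volume (W.shadow inChain Q) ≤ N * volume U :=
  calc ∑ Q ∈ F, volume (W.shadow inChain Q)
      = ∑ Q ∈ F, volume.restrict U (W.shadow inChain Q) :=
        Finset.sum_congr rfl fun Q hQ => (Measure.restrict_eq_self volume (hU Q hQ)).symm
    _ ≤ N * volume.restrict U (⋃ R, W.cube R) :=
        sum_measure_biUnion_le _
          (fun R => (W.nullMeasurableSet_cube R).mono Measure.restrict_le_self)
          (fun _ _ h => Measure.restrict_le_self.absolutelyContinuous (W.aedisjoint_cube h)) F
          (fun Q => {R | inChain Q R}) hN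
    _ ≤ N * volume U := by
        gcongr N * ?_
        exact (measure_mono (Set.subset_univ _)).trans_eq (Measure.restrict_apply_univ U)

end Shadow

/-- The family `W_j` of Whitney cubes of side length `2 ^ (-j)`, as a set of indices. -/
def generation (j : ℕ) : Set ℕ :=
  {Q | W.s Q = (2 : ℝ) ^ (-(j : ℤ))}

/-- The class `W_{j,k,σ}` of cubes of side length `2 ^ (-j)` whose shadow has volume between
`2 ^ (-(j - k) n)` and `σ 2 ^ (-(j - k - 1) n)`, as a set of indices. -/
def shadowClass (inChain : ℕ → ℕ → Prop) (σ : ℝ) (j k : ℕ) : Set ℕ :=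
  {Q | W.s Q = (2 : ℝ) ^ (-(j : ℤ)) ∧
    ENNReal.ofReal ((2 : ℝ) ^ (-((j : ℝ) - k) * n)) ≤ volume (W.shadow inChain Q) ∧
    volume (W.shadow inChain Q) ≤ ENNReal.ofReal (σ * (2 : ℝ) ^ (-((j : ℝ) - k - 1) * n))}

section Generation

variable {W} {inChain : ℕ → ℕ → Prop} {j k Q : ℕ} {A β σ : ℝ}

theorem finite_generation (hG : Bornology.IsBounded G) : (W.generation j).Finite :=
  (W.finite_setOf_le_side hG (by positivity)).subset fun _ hQ => hQ.ge

theorem shadowClass_subset_generation : W.shadowClass inChain σ j k ⊆ W.generation j :=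
  fun _ hQ => hQ.1

theorem side_le_one (hQ : Q ∈ W.generation j) : W.s Q ≤ 1 :=
  hQ.trans_le (zpow_le_one_of_nonpos₀ one_le_two (by simp))

theorem side_rpow (hQ : Q ∈ W.generation j) (x : ℝ) : W.s Q ^ x = (2 : ℝ) ^ (-(j : ℝ) * x) := by
  rw [show W.s Q = _ from hQ, ← Real.rpow_neg_natCast, Real.rpow_mul zero_le_two]

theorem ofReal_two_rpow_le_volume_shadow (hself : inChain Q Q) (hQ : Q ∈ W.generation j) :
    ENNReal.ofReal ((2 : ℝ) ^ (-(j : ℝ) * n)) ≤ volume (W.shadow inChain Q) := by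
  rw [← side_rpow hQ, Real.rpow_natCast]
  exact ofReal_side_pow_le_volume_shadow hself

theorem volume_shadow_le_ofReal_two_rpow (hG : Bornology.IsBounded G)
    (hdiam : Metric.diam (W.shadow inChain Q) ≤ A * W.s Q ^ β) (hQ : Q ∈ W.generation j) :
    volume (W.shadow inChain Q) ≤ ENNReal.ofReal (A ^ n * (2 : ℝ) ^ (-(j : ℝ) * n * β)) := by
  refine (volume_shadow_le hG hdiam).trans_eq ?_
  rw [mul_pow, side_rpow hQ, ← Real.rpow_mul_natCast zero_le_two, mul_right_comm]

theorem exists_mem_shadowClass (hβ : β ≤ 1) (hσ : 1 ≤ σ) (hQ : Q ∈ W.generation j)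
    (hlower : ENNReal.ofReal ((2 : ℝ) ^ (-(j : ℝ) * n)) ≤ volume (W.shadow inChain Q))
    (hupper : volume (W.shadow inChain Q) ≤
      ENNReal.ofReal (σ * (2 : ℝ) ^ (-(j : ℝ) * n * β))) :
    ∃ k : ℕ, (k : ℝ) ≤ (j : ℝ) - j * β ∧ Q ∈ W.shadowClass inChain σ j k := by
  have hfloor : 0 ≤ (j : ℝ) - j * β := sub_nonneg.2 (mul_le_of_le_one_right j.cast_nonneg hβ)
  have hexp : -(j : ℝ) * n * β ≤ -((j : ℝ) - ⌊(j : ℝ) - j * β⌋₊ - 1) * n := by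
    nlinarith [Nat.lt_floor_add_one ((j : ℝ) - j * β), n.cast_nonneg (α := ℝ)]
  obtain ⟨k, hk, hkQ⟩ := exists_le_mem_Icc_of_forall_succ_le
    (a := fun k : ℕ => ENNReal.ofReal ((2 : ℝ) ^ (-((j : ℝ) - k) * n)))
    (b := fun k : ℕ => ENNReal.ofReal (σ * (2 : ℝ) ^ (-((j : ℝ) - k - 1) * n)))
    (v := volume (W.shadow inChain Q)) (m := ⌊(j : ℝ) - j * β⌋₊)
    (fun k => by
      rw [Nat.cast_succ, ← sub_sub]
      exact ENNReal.ofReal_le_ofReal (le_mul_of_one_le_left (by positivity) hσ))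
    (by simpa only [Nat.cast_zero, sub_zero] using hlower)
    (hupper.trans <| ENNReal.ofReal_le_ofReal <| mul_le_mul_of_nonneg_left
      (Real.rpow_le_rpow_of_exponent_le one_le_two hexp) (zero_le_one.trans hσ))
  exact ⟨k, (Nat.le_floor_iff hfloor).1 hk, hQ, hkQ⟩

theorem ncard_shadowClass_mul_le (hG : Bornology.IsBounded G) {N : ℝ}
    {U : Set (EuclideanSpace ℝ (Fin n))} (hU : ∀ Q ∈ W.generation j, W.shadow inChain Q ⊆ U)
    (hN : ∀ R, ({Q | Q ∈ W.generation j ∧ inChain Q R}.ncard : ℝ) ≤ N) :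
    (W.shadowClass inChain σ j k).ncard * ENNReal.ofReal ((2 : ℝ) ^ (-((j : ℝ) - k) * n)) ≤
      ENNReal.ofReal N * volume U := by
  have hgen : (W.generation j).Finite := finite_generation hG
  have hfin : (W.shadowClass inChain σ j k).Finite := hgen.subset shadowClass_subset_generation
  have hmem : ∀ Q ∈ hfin.toFinset, Q ∈ W.shadowClass inChain σ j k :=
    fun _ => hfin.mem_toFinset.1
  have hcount : ∀ R, ({Q | Q ∈ hfin.toFinset ∧ inChain Q R}.ncard : ℝ≥0∞) ≤ ENNReal.ofReal N := by
    intro R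
    rw [← ENNReal.ofReal_natCast]
    refine ENNReal.ofReal_le_ofReal (le_trans ?_ (hN R))
    have hsub : {Q | Q ∈ hfin.toFinset ∧ inChain Q R} ⊆ {Q | Q ∈ W.generation j ∧ inChain Q R} :=
      fun Q hQ => ⟨(hmem Q hQ.1).1, hQ.2⟩
    exact_mod_cast Set.ncard_le_ncard hsub (hgen.subset fun _ hQ => hQ.1)
  calc (W.shadowClass inChain σ j k).ncard * ENNReal.ofReal ((2 : ℝ) ^ (-((j : ℝ) - k) * n))
      ≤ ∑ Q ∈ hfin.toFinset, volume (W.shadow inChain Q) := by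
        rw [Set.ncard_eq_toFinset_card _ hfin, ← nsmul_eq_mul]
        exact Finset.card_nsmul_le_sum _ _ _ fun Q hQ => (hmem Q hQ).2.1
    _ ≤ ENNReal.ofReal N * volume U :=
        sum_volume_shadow_le _ (fun Q hQ => hU Q (hmem Q hQ).1) hcount

theorem exists_ncard_shadowClass_le (hG : Bornology.IsBounded G) (hβ : β ∈ Set.Icc 0 1)
    {l : ℝ} (hdim : upperMinkowskiDim n (frontier G) < l) (hself : ∀ Q, inChain Q Q)
    (hA : 0 ≤ A) (hdiam : ∀ Q, Metric.diam (W.shadow inChain Q) ≤ A * W.s Q ^ β)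
    {cn : ℝ} (hcn : 0 < cn)
    (hchain : ∀ R j : ℕ, ({Q | Q ∈ W.generation j ∧ inChain Q R}.ncard : ℝ) ≤ cn * j) :
    ∃ c > 0, ∀ (σ : ℝ) (j k : ℕ), ((W.shadowClass inChain σ j k).ncard : ℝ) ≤
      c * j * (2 : ℝ) ^ ((n : ℝ) * ((j : ℝ) - k) + (j : ℝ) * β * (l - n)) := by
  set K := A + (4 * √n + 1)
  have hK : 0 < K := by positivity
  obtain ⟨C, hC, hthick⟩ :=
    exists_volume_thickening_le (hG.closure.subset frontier_subset_closure) hdim K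
  refine ⟨cn * (C * K ^ ((n : ℝ) - l)), by positivity, fun σ j k => ?_⟩
  set t := (2 : ℝ) ^ (-(j : ℝ) * β)
  have ht : t ≤ 1 := Real.rpow_le_one_of_one_le_of_nonpos one_le_two <|
    mul_nonpos_of_nonpos_of_nonneg (neg_nonpos.2 j.cast_nonneg) hβ.1
  have hshadow : ∀ Q ∈ W.generation j,
      W.shadow inChain Q ⊆ Metric.thickening (K * t) (frontier G) := by
    intro Q hQ
    have hst : W.s Q ^ β = t := side_rpow hQ β
    rw [← hst]
    exact shadow_subset_thickening_frontier hG hβ.2 (hself Q) (hdiam Q) (side_le_one hQ)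
  have hcount : (W.shadowClass inChain σ j k).ncard * (2 : ℝ) ^ (-((j : ℝ) - k) * n) ≤
      cn * j * (C * (K * t) ^ ((n : ℝ) - l)) := by
    have hvol := (ncard_shadowClass_mul_le (σ := σ) (k := k) hG hshadow fun R => hchain R j).trans
      (mul_le_mul_right (hthick (K * t) ⟨by positivity, mul_le_of_le_one_right hK.le ht⟩) _)
    rw [← ENNReal.ofReal_natCast, ← ENNReal.ofReal_mul (by positivity),
      ← ENNReal.ofReal_mul (by positivity)] at hvol
    exact (ENNReal.ofReal_le_ofReal_iff (by positivity)).1 hvol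
  have hrpow : (K * t) ^ ((n : ℝ) - l) =
      K ^ ((n : ℝ) - l) * (2 : ℝ) ^ ((j : ℝ) * β * (l - n)) := by
    rw [Real.mul_rpow hK.le (by positivity), ← Real.rpow_mul zero_le_two]
    congr 2
    ring
  rw [neg_mul, mul_comm _ (n : ℝ), Real.rpow_neg zero_le_two, ← div_eq_mul_inv,
    div_le_iff₀ (by positivity), hrpow] at hcount
  rw [Real.rpow_add two_pos]
  linarith

end Generation

end WhitneyDecomp

theorem stmt_18_general {n : ℕ} {G : Set (EuclideanSpace ℝ (Fin n))}
    (hGb : Bornology.IsBounded G) {β : ℝ} (hβ : β ∈ Set.Icc (0 : ℝ) 1)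
    {l : ℝ} (hdim : upperMinkowskiDim n (frontier G) < l)
    (W : WhitneyDecomp n G) {inChain : ℕ → ℕ → Prop} (hself : ∀ Q, inChain Q Q)
    {cS : ℝ} (hcS : 0 ≤ cS)
    (hdiam : ∀ Q, Metric.diam (W.shadow inChain Q) ≤ cS * Metric.diam (W.cube Q) ^ β)
    {cn : ℝ} (hcn : 0 < cn)
    (hchain : ∀ R j : ℕ, ({Q | Q ∈ W.generation j ∧ inChain Q R}.ncard : ℝ) ≤ cn * j) :
    ∃ σ : ℝ, 1 ≤ σ ∧ ∃ c : ℝ, 0 < c ∧ ∀ j : ℕ,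
      (∀ Q ∈ W.generation j,
        (ENNReal.ofReal ((2 : ℝ) ^ (-(j : ℝ) * n)) ≤ volume (W.shadow inChain Q) ∧
          volume (W.shadow inChain Q) ≤ ENNReal.ofReal (σ * (2 : ℝ) ^ (-(j : ℝ) * n * β))) ∧
        ∃ k : ℕ, (k : ℝ) ≤ (j : ℝ) - j * β ∧ Q ∈ W.shadowClass inChain σ j k) ∧
      ∀ k : ℕ, ((W.shadowClass inChain σ j k).ncard : ℝ) ≤
        c * j * (2 : ℝ) ^ ((n : ℝ) * ((j : ℝ) - k) + (j : ℝ) * β * (l - n)) := by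
  set A := cS * √n ^ β
  have hdiam' : ∀ Q, Metric.diam (W.shadow inChain Q) ≤ A * W.s Q ^ β :=
    fun Q => WhitneyDecomp.diam_shadow_le hβ.1 hcS (hdiam Q)
  obtain ⟨c, hc, hcount⟩ := WhitneyDecomp.exists_ncard_shadowClass_le hGb hβ hdim hself
    (by positivity : 0 ≤ A) hdiam' hcn hchain
  refine ⟨max 1 (A ^ n), le_max_left _ _, c, hc, fun j => ⟨fun Q hQ => ?_, hcount _ j⟩⟩
  have hlower := WhitneyDecomp.ofReal_two_rpow_le_volume_shadow (hself Q) hQ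
  have hupper : volume (W.shadow inChain Q) ≤
      ENNReal.ofReal (max 1 (A ^ n) * (2 : ℝ) ^ (-(j : ℝ) * n * β)) := by
    refine (WhitneyDecomp.volume_shadow_le_ofReal_two_rpow hGb (hdiam' Q) hQ).trans ?_
    gcongr
    exact le_max_right _ _
  exact ⟨⟨hlower, hupper⟩,
    WhitneyDecomp.exists_mem_shadowClass hβ.2 (le_max_left _ _) hQ hlower hupper⟩

/-- Suppose the bounded domain `G` satisfies a `β`-quasihyperbolic
boundary condition and `dim_M(∂G) < λ`, `λ ∈ [n-1, n)`. Whitney cubes carry chains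
(`inChain Q R` meaning `Q*` belongs to the chain of `R`), with shadows
`S Q = ⋃ {R : inChain Q R}`; the chain construction satisfies `inChain R R`,
`diam(S Q) ≤ c_S diam(Q)^β`, and `#{Q ∈ W_j : Q* ∈ C(R)} ≤ c_n j`. Then there are
`σ ≥ 1` and `c > 0` such that for every `j`): (i) every `Q ∈ W_j` satisfies
`2^{-jn} ≤ |S(Q)| ≤ σ 2^{-jnβ}` and belongs to some `W_{j,k,σ}` with
`0 ≤ k ≤ [j - jβ]`, where `W_{j,k,σ} = {Q ∈ W_j : 2^{-(j-k)n} ≤ |S(Q)| ≤ σ 2^{-(j-k-1)n}}`;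
(ii) `#W_{j,k,σ} ≤ c j 2^{n(j-k) + jβ(λ-n)}` for `0 ≤ k ≤ [j - jβ]`. -/
theorem stmt_18 (n : ℕ) (hn : 2 ≤ n) (G : Set (EuclideanSpace ℝ (Fin n)))
    (hGo : IsOpen G) (hGc : IsConnected G) (hGb : Bornology.IsBounded G)
    (β : ℝ) (hβ : β ∈ Set.Ioc (0:ℝ) 1) (hqhbc : QHBC G β)
    (l : ℝ) (hl : l ∈ Set.Ico ((n:ℝ) - 1) (n:ℝ))
    (hdim : upperMinkowskiDim n (frontier G) < l)
    (W : WhitneyDecomp n G) (inChain : ℕ → ℕ → Prop)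
    (S : ℕ → Set (EuclideanSpace ℝ (Fin n)))
    (hShadow : ∀ Q, S Q = ⋃ R ∈ {R : ℕ | inChain Q R}, W.cube R)
    (hself : ∀ R, inChain R R)
    (cS : ℝ) (hcS : 0 < cS)
    (hdiam : ∀ Q, Metric.diam (S Q) ≤ cS * Metric.diam (W.cube Q) ^ β)
    (cn : ℝ) (hcn : 0 < cn)
    (heks : ∀ (R : ℕ) (j : ℕ),
      ({Q : ℕ | W.s Q = (2:ℝ) ^ (-(j:ℤ)) ∧ inChain Q R}.ncard : ℝ) ≤ cn * j) :
    ∃ σ : ℝ, 1 ≤ σ ∧ ∃ c : ℝ, 0 < c ∧ ∀ j : ℕ,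
      (∀ Q : ℕ, W.s Q = (2:ℝ) ^ (-(j:ℤ)) →
        (ENNReal.ofReal ((2:ℝ) ^ (-(j:ℝ) * n)) ≤ volume (S Q) ∧
          volume (S Q) ≤ ENNReal.ofReal (σ * (2:ℝ) ^ (-(j:ℝ) * n * β))) ∧
        ∃ k : ℕ, (k : ℝ) ≤ (j:ℝ) - j * β ∧
          ENNReal.ofReal ((2:ℝ) ^ (-((j:ℝ) - k) * n)) ≤ volume (S Q) ∧
          volume (S Q) ≤ ENNReal.ofReal (σ * (2:ℝ) ^ (-((j:ℝ) - k - 1) * n))) ∧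
      ∀ k : ℕ, (k : ℝ) ≤ (j:ℝ) - j * β →
        ({Q : ℕ | W.s Q = (2:ℝ) ^ (-(j:ℤ)) ∧
            ENNReal.ofReal ((2:ℝ) ^ (-((j:ℝ) - k) * n)) ≤ volume (S Q) ∧
            volume (S Q) ≤ ENNReal.ofReal (σ * (2:ℝ) ^ (-((j:ℝ) - k - 1) * n))}.ncard : ℝ)
          ≤ c * j * (2:ℝ) ^ ((n:ℝ) * ((j:ℝ) - k) + (j:ℝ) * β * (l - n)) := by
  obtain rfl : S = W.shadow inChain := funext hShadow
  obtain ⟨σ, hσ, c, hc, h⟩ :=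
    stmt_18_general hGb (Set.Ioc_subset_Icc_self hβ) hdim W hself hcS.le hdiam hcn heks
  refine ⟨σ, hσ, c, hc, fun j => ⟨fun Q hQ => ?_, fun k _ => (h j).2 k⟩⟩
  obtain ⟨hvol, k, hk, hQk⟩ := (h j).1 Q hQ
  exact ⟨hvol, k, hk, hQk.2⟩
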